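/- arXiv:1604.00460 — 2 statements merged into one kernel-verified Lean document; each statement's English description precedes it below -/
import Mathlib

section
/- Consider a scaling of the heterogeneous key predistribution model with on/off channels satisfying Λ_1(n) = α_n λ_1(n) = c_n (log n)/n with lim_{n→∞} c_n = c. If c < 1, then limsup_{n→∞} E[x_{n,1} x_{n,2}] / (E[x_{n,1}])² ≤ 1, where x_{n,ℓ} is the indicator that vertex v_ℓ belongs to class 1 and is isolated in G(n; μ, K_n, P_n, α_n). -/
/-!
Write `Λ = α λ₁` and let `p = p₁₁`. Conditionally on the key ring of a class-1 vertex, the other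
vertices are independently adjacent to it with probability `Λ`, so `E[x₁] = μ₁ (1 - Λ)^(n-1)`.

For two class-1 vertices with rings `S`, `T`, another vertex is adjacent to neither with probability
`1 - 2Λ + α² ∑ μ_j P[a ring of size K_j meets both S and T]`. If `S` and `T` are disjoint, the two
meetings are negatively correlated (log-concavity of the binomial coefficient in its upper index),
so the last term is at most `α² ∑ μ_j p_{1j}² ≤ C Λ²` with `C = ∑ 1/μ_j`. If they intersect, which
has probability `p`, an extra `α Λ` suffices. The second moment is therefore at most
`μ₁² ((1 - p) X^(n-2) + p Y^(n-2))` with `X = (1 - Λ)² + C Λ²` and `Y = X + α Λ`.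

Put `L = n Λ / (1 - Λ)²`. By convexity `exp (α L) ≤ 1 + α (exp L - 1)`, and `α μ₁ p ≤ Λ`, so the
ratio of the moments is at most `(1 - Λ)⁻² exp (C Λ L) (1 + Λ exp L / μ₁)`. As
`Λ = c_n log n / n` with `c_n → c < 1`, both `Λ L` and `Λ exp L` are at most of order
`log n · n^(c' - 1)` for some `c' < 1`, and the bound tends to `1`.
-/

open Filter

/-- Probability that a uniformly random `b`-subset of a `P`-set avoids a fixed `a`-subset. -/
noncomputable def avoidProb (P a b : ℕ) : ℝ := ((P - a).choose b : ℝ) / (P.choose b : ℝ)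

/-- `p_{ab}` : probability that independent uniformly random key rings of sizes
`a` and `b` (from a pool of size `P`) intersect. -/
noncomputable def pEdge (P a b : ℕ) : ℝ := 1 - avoidProb P a b

/-- `λ_i` : mean edge probability of a class-`i` node in the inhomogeneous random key graph. -/
noncomputable def lamb {r : ℕ} (μ : Fin (r + 1) → ℝ) (K : Fin (r + 1) → ℕ) (P : ℕ)
    (i : Fin (r + 1)) : ℝ :=
  ∑ j, μ j * pEdge P (K i) (K j)

/-- A configuration of the model: a class for each vertex, a key ring for each vertex,
and an on/off state for each (unordered) channel. -/
abbrev Config (n r P : ℕ) := (Fin n → Fin (r + 1)) × (Fin n → Finset (Fin P)) × (Sym2 (Fin n) → Bool)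

/-- Probability weight of a configuration: classes are i.i.d. with law `μ`; given its class `i`,
a vertex's key ring is uniform among the `C(P, K i)` subsets of size `K i`; channels over
distinct pairs are i.i.d. Bernoulli(`α`) (diagonal channel variables are forced to `false`). -/
noncomputable def wt {n r P : ℕ} (μ : Fin (r + 1) → ℝ) (K : Fin (r + 1) → ℕ) (α : ℝ)
    (c : Config n r P) : ℝ :=
  (∏ x : Fin n, μ (c.1 x)) *
    (∏ x : Fin n, if (c.2.1 x).card = K (c.1 x) then ((P.choose (K (c.1 x)) : ℝ))⁻¹ else 0) *
    (∏ e : Sym2 (Fin n),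
      if e.IsDiag then (if c.2.2 e then 0 else 1) else (if c.2.2 e then α else 1 - α))

open Classical in
/-- Probability of an event under the heterogeneous key predistribution model
with on/off channels. -/
noncomputable def pr {n r P : ℕ} (μ : Fin (r + 1) → ℝ) (K : Fin (r + 1) → ℕ) (α : ℝ)
    (E : Config n r P → Prop) : ℝ :=
  ∑ c : Config n r P, if E c then wt μ K α c else 0

/-- Two vertices are adjacent iff their key rings intersect and the channel between them is on. -/
def Adj {n r P : ℕ} (c : Config n r P) (x y : Fin n) : Prop :=
  x ≠ y ∧ ((c.2.1 x) ∩ (c.2.1 y)).Nonempty ∧ c.2.2 s(x, y) = true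

/-- The random graph `G(n; μ, K, P, α)` as a simple graph. -/
def graphOf {n r P : ℕ} (c : Config n r P) : SimpleGraph (Fin n) :=
  SimpleGraph.fromRel (fun x y => ((c.2.1 x) ∩ (c.2.1 y)).Nonempty ∧ c.2.2 s(x, y) = true)

/-- A vertex is isolated if it has no neighbours. -/
def Isolated {n r P : ℕ} (c : Config n r P) (x : Fin n) : Prop := ∀ y, ¬ Adj c x y

/-- The graph has no isolated nodes. -/
def NoIsolatedNodes {n r P : ℕ} (c : Config n r P) : Prop := ∀ x, ¬ Isolated c x

/-- Event that the vertex with index `idx` belongs to class `1` (index `0`)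
and is isolated. -/
def IdxIsClass1Isolated {n r P : ℕ} (idx : ℕ) (cfg : Config n r P) : Prop :=
  ∃ x : Fin n, (x : ℕ) = idx ∧ cfg.1 x = 0 ∧ Isolated cfg x

open scoped BigOperators

/-- Fubini: given the coordinates in the range of `s`, the remaining ones are independent, and each
of them contributes the same factor. -/
lemma sum_prod_mul_prod_compl_range {ι κ V R : Type*} [Fintype ι] [Fintype κ] [DecidableEq ι]
    [DecidableEq κ] [Fintype V] [CommSemiring R] (s : ι ↪ κ) (f : V → R) (g : (ι → V) → R)
    (h : (ι → V) → V → R) :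
    ∑ v : κ → V, (∏ x, f (v x)) *
        (g (v ∘ s) * ∏ z : ↥(Set.range s)ᶜ, h (v ∘ s) (v z)) =
      ∑ w : ι → V, (∏ a, f (w a)) * g w *
        (∑ u, f u * h w u) ^ (Fintype.card κ - Fintype.card ι) := by
  classical
  let e : ι ⊕ ↥(Set.range s)ᶜ ≃ κ :=
    (Equiv.sumCongr (Equiv.ofInjective s s.injective) (Equiv.refl _)).trans
      (Equiv.Set.sumCompl (Set.range s))
  have e_inl (a : ι) : e (.inl a) = s a := by simp [e]
  have e_inr (z : ↥(Set.range s)ᶜ) : e (.inr z) = z := by simp [e]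
  have card_compl : Fintype.card κ - Fintype.card ι = Fintype.card ↥(Set.range s)ᶜ := by
    simp [← Fintype.card_congr e]
  let split : (κ → V) ≃ (ι → V) × (↥(Set.range s)ᶜ → V) :=
    (e.arrowCongr (Equiv.refl V)).symm.trans (Equiv.sumArrowEquivProdArrow _ _ _)
  have split_eq (v : κ → V) : split v = (v ∘ s, fun z : ↥(Set.range s)ᶜ => v z) := by
    ext <;> simp [split, Equiv.sumArrowEquivProdArrow, e_inl, e_inr]
  have prod_split (v : κ → V) :
      ∏ x, f (v x) = (∏ a, f (v (s a))) * ∏ z : ↥(Set.range s)ᶜ, f (v z) := by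
    simp [← e.prod_comp, Fintype.prod_sum_type, e_inl, e_inr]
  have expand (w : ι → V) : (∑ u, f u * h w u) ^ (Fintype.card κ - Fintype.card ι) =
      ∑ u : ↥(Set.range s)ᶜ → V, (∏ z, f (u z)) * ∏ z, h w (u z) := by
    rw [card_compl, Fintype.card, ← Finset.prod_const, Fintype.prod_sum]
    simp only [Finset.prod_mul_distrib]
  simp only [expand, Finset.mul_sum]
  rw [← Fintype.sum_prod_type', ← split.sum_comp]
  refine Finset.sum_congr rfl fun v _ => ?_
  simp only [split_eq, prod_split, Function.comp_apply]
  ring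

/-! ### Elementary inequalities -/

lemma sum_mul_sq_le {ι : Type*} (t : Finset ι) {w p : ι → ℝ} (hw : ∀ j ∈ t, 0 ≤ w j)
    (hp : ∀ j ∈ t, 0 ≤ p j) :
    ∑ j ∈ t, w j * p j ^ 2 ≤ (∑ j ∈ t, (w j)⁻¹) * (∑ j ∈ t, w j * p j) ^ 2 := by
  rw [Finset.sum_mul]
  refine Finset.sum_le_sum fun j hj => ?_
  have single_le : w j * p j ≤ ∑ k ∈ t, w k * p k :=
    Finset.single_le_sum (fun k hk => mul_nonneg (hw k hk) (hp k hk)) hj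
  calc w j * p j ^ 2 = (w j)⁻¹ * (w j * p j) ^ 2 := by
        rcases eq_or_ne (w j) 0 with h0 | h0
        · simp [h0]
        · field_simp
    _ ≤ (w j)⁻¹ * (∑ k ∈ t, w k * p k) ^ 2 := by
        have := hw j hj
        have := mul_nonneg this (hp j hj)
        gcongr

lemma descFactorial_sub_sub_mul_le (n a a' b : ℕ) :
    (n - a - a').descFactorial b * n.descFactorial b ≤
      (n - a).descFactorial b * (n - a').descFactorial b := by
  simp only [Nat.descFactorial_eq_prod_range, ← Finset.prod_mul_distrib]
  refine Finset.prod_le_prod' fun i _ => ?_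
  obtain h | h := Nat.le_total n (a + a' + i)
  · simp [show n - a - a' - i = 0 by lia]
  · obtain ⟨k, rfl⟩ := Nat.exists_eq_add_of_le h
    rw [show a + a' + i + k - a - a' - i = k by lia, show a + a' + i + k - i = k + a + a' by lia,
      show a + a' + i + k - a - i = k + a' by lia, show a + a' + i + k - a' - i = k + a by lia]
    nlinarith

lemma choose_sub_sub_mul_le (n a a' b : ℕ) :
    (n - a - a').choose b * n.choose b ≤ (n - a).choose b * (n - a').choose b := by
  have h := descFactorial_sub_sub_mul_le n a a' b
  simp only [Nat.descFactorial_eq_factorial_mul_choose] at h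
  refine le_of_mul_le_mul_left ?_ (Nat.mul_pos b.factorial_pos b.factorial_pos)
  linarith

lemma exp_mul_le_one_add_mul_exp_sub_one {a : ℝ} (ha : a ∈ Set.Icc 0 1) (x : ℝ) :
    Real.exp (a * x) ≤ 1 + a * (Real.exp x - 1) := by
  have h := convexOn_exp.2 (Set.mem_univ x) (Set.mem_univ 0) ha.1 (sub_nonneg.2 ha.2)
    (add_sub_cancel a 1)
  simp only [smul_eq_mul, mul_zero, add_zero, Real.exp_zero, mul_one] at h
  linarith

lemma one_add_pow_le_exp_mul {x : ℝ} (hx : 0 ≤ 1 + x) (m : ℕ) :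
    (1 + x) ^ m ≤ Real.exp (m * x) := by
  rw [Real.exp_nat_mul]
  exact pow_le_pow_left₀ hx (by linarith [Real.add_one_le_exp x]) m

lemma mixture_pow_le_exp_mul {a p t u : ℝ} (ha : a ∈ Set.Icc 0 1) (hp : p ∈ Set.Icc 0 1)
    (ht : 0 ≤ t) (hu : 0 ≤ u) (m : ℕ) :
    (1 + u) ^ m + p * ((1 + u + a * t) ^ m - (1 + u) ^ m) ≤
      Real.exp (m * u) * (1 + a * p * Real.exp (m * t)) := by
  have hat : 0 ≤ a * t := mul_nonneg ha.1 ht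
  calc (1 + u) ^ m + p * ((1 + u + a * t) ^ m - (1 + u) ^ m)
    _ = (1 - p) * (1 + u) ^ m + p * (1 + (u + a * t)) ^ m := by ring
    _ ≤ (1 - p) * Real.exp (m * u) + p * Real.exp (m * (u + a * t)) := by
      have := sub_nonneg.2 hp.2
      have := hp.1
      gcongr
      · exact one_add_pow_le_exp_mul (by linarith) m
      · exact one_add_pow_le_exp_mul (by linarith) m
    _ = Real.exp (m * u) * (1 - p + p * Real.exp (a * (m * t))) := by
      rw [mul_add, Real.exp_add, mul_left_comm (m : ℝ) a t]
      ring
    _ ≤ Real.exp (m * u) * (1 - p + p * (1 + a * (Real.exp (m * t) - 1))) := by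
      have := hp.1
      gcongr
      exact exp_mul_le_one_add_mul_exp_sub_one ha _
    _ ≤ Real.exp (m * u) * (1 + a * p * Real.exp (m * t)) := by
      refine mul_le_mul_of_nonneg_left ?_ (Real.exp_pos _).le
      linarith [mul_nonneg ha.1 hp.1]

/-! ### Uniformly random key rings -/

section RandomKeyGraph

variable {P : ℕ}

/-- The possible key rings of size `b`; `𝔼 U ∈ keyRings P b` is the mean over a uniformly random
ring. -/
abbrev keyRings (P b : ℕ) : Finset (Finset (Fin P)) := Finset.univ.powersetCard b

/-- Indicator of the event that two key rings share a key. -/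
def meet (S T : Finset (Fin P)) : ℝ := if Disjoint S T then 0 else 1

lemma keyRings_nonempty {b : ℕ} (hb : b ≤ P) : (keyRings P b).Nonempty := by
  simpa using hb

lemma meet_nonneg (S T : Finset (Fin P)) : 0 ≤ meet S T := by
  unfold meet; split_ifs <;> norm_num

lemma meet_le_one (S T : Finset (Fin P)) : meet S T ≤ 1 := by
  unfold meet; split_ifs <;> norm_num

lemma expect_disjoint (T : Finset (Fin P)) (b : ℕ) :
    𝔼 U ∈ keyRings P b, (if Disjoint T U then 1 else 0 : ℝ) = avoidProb P T.card b := by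
  have avoiding : (keyRings P b).filter (Disjoint T) = Tᶜ.powersetCard b := by
    ext U
    simp [Finset.mem_powersetCard, Finset.subset_compl_comm, Finset.subset_compl_iff_disjoint_right,
      and_comm]
  rw [Finset.expect_eq_sum_div_card, Finset.sum_boole, avoiding]
  simp [avoidProb, Finset.card_compl]

lemma expect_meet {b : ℕ} (hb : b ≤ P) (T : Finset (Fin P)) :
    𝔼 U ∈ keyRings P b, meet T U = pEdge P T.card b := by
  have complement (U : Finset (Fin P)) : meet T U = 1 - if Disjoint T U then 1 else 0 := by
    unfold meet; split_ifs <;> norm_num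
  simp only [complement]
  rw [Finset.expect_sub_distrib, Finset.expect_const (keyRings_nonempty hb), expect_disjoint,
    pEdge]

lemma avoidProb_add_le_mul (P a a' b : ℕ) :
    avoidProb P (a + a') b ≤ avoidProb P a b * avoidProb P a' b := by
  unfold avoidProb
  rcases Nat.eq_zero_or_pos (P.choose b) with h0 | h0
  · simp [h0]
  rw [div_mul_div_comm, div_le_div_iff₀ (by positivity) (by positivity), ← mul_assoc,
    Nat.sub_add_eq]
  refine mul_le_mul_of_nonneg_right ?_ (by positivity)
  exact_mod_cast choose_sub_sub_mul_le P a a' b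

lemma pEdge_nonneg (P a b : ℕ) : 0 ≤ pEdge P a b := by
  rw [pEdge, avoidProb, sub_nonneg]
  refine div_le_one_of_le₀ ?_ (by positivity)
  exact_mod_cast Nat.choose_le_choose b (Nat.sub_le P a)

lemma pEdge_le_one (P a b : ℕ) : pEdge P a b ≤ 1 :=
  sub_le_self _ (by unfold avoidProb; positivity)

lemma expect_meet_mul_meet_le {b : ℕ} (hb : b ≤ P) (S T : Finset (Fin P)) :
    𝔼 U ∈ keyRings P b, meet S U * meet T U ≤ pEdge P S.card b := by
  rw [← expect_meet hb S]
  exact Finset.expect_le_expect fun U _ =>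
    mul_le_of_le_one_right (meet_nonneg S U) (meet_le_one T U)

lemma expect_meet_mul_meet_le_of_disjoint {b : ℕ} (hb : b ≤ P) {S T : Finset (Fin P)}
    (hST : Disjoint S T) :
    𝔼 U ∈ keyRings P b, meet S U * meet T U ≤ pEdge P S.card b * pEdge P T.card b := by
  have incl_excl (U : Finset (Fin P)) : meet S U * meet T U =
      meet S U + meet T U - (1 - if Disjoint (S ∪ T) U then 1 else 0) := by
    simp only [meet, Finset.disjoint_union_left]
    split_ifs <;> simp_all
  calc 𝔼 U ∈ keyRings P b, meet S U * meet T U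
    _ = pEdge P S.card b + pEdge P T.card b - (1 - avoidProb P (S.card + T.card) b) := by
      simp only [incl_excl, Finset.expect_sub_distrib, Finset.expect_add_distrib, expect_meet hb,
        expect_disjoint, Finset.card_union_of_disjoint hST,
        Finset.expect_const (keyRings_nonempty hb)]
    _ ≤ pEdge P S.card b * pEdge P T.card b := by
      have := avoidProb_add_le_mul P S.card T.card b
      unfold pEdge
      linarith

/-! ### The law of the model -/

variable {r n : ℕ}

/-- Joint law of the class and the key ring of a single vertex. -/
noncomputable def vertexWeight (μ : Fin (r + 1) → ℝ) (K : Fin (r + 1) → ℕ)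
    (v : Fin (r + 1) × Finset (Fin P)) : ℝ :=
  μ v.1 * if v.2.card = K v.1 then (P.choose (K v.1) : ℝ)⁻¹ else 0

/-- Law of the state of a single channel; channels on the diagonal are always off. -/
noncomputable def channelWeight (α : ℝ) (e : Sym2 (Fin n)) (b : Bool) : ℝ :=
  if e.IsDiag then (if b then 0 else 1) else (if b then α else 1 - α)

lemma wt_eq_prod_mul_prod (μ : Fin (r + 1) → ℝ) (K : Fin (r + 1) → ℕ) (α : ℝ) (c : Config n r P) :
    wt μ K α c =
      (∏ x, vertexWeight μ K (c.1 x, c.2.1 x)) * ∏ e, channelWeight α e (c.2.2 e) := by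
  simp only [wt, vertexWeight, channelWeight, Finset.prod_mul_distrib]

lemma wt_nonneg {μ : Fin (r + 1) → ℝ} (hμ : ∀ j, 0 ≤ μ j) (K : Fin (r + 1) → ℕ) {α : ℝ}
    (hα : α ∈ Set.Icc 0 1) (c : Config n r P) : 0 ≤ wt μ K α c := by
  have hα0 := hα.1
  have hα1 : 0 ≤ 1 - α := sub_nonneg.2 hα.2
  refine mul_nonneg (mul_nonneg (Finset.prod_nonneg fun x _ => hμ _) ?_) ?_ <;>
  · refine Finset.prod_nonneg fun _ _ => ?_
    split_ifs <;> positivity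

lemma pr_nonneg {μ : Fin (r + 1) → ℝ} (hμ : ∀ j, 0 ≤ μ j) (K : Fin (r + 1) → ℕ) {α : ℝ}
    (hα : α ∈ Set.Icc 0 1) (E : Config n r P → Prop) : 0 ≤ pr μ K α E :=
  Finset.sum_nonneg fun c _ => by split_ifs <;> simp [wt_nonneg hμ K hα]

lemma pr_mono {μ : Fin (r + 1) → ℝ} (hμ : ∀ j, 0 ≤ μ j) (K : Fin (r + 1) → ℕ) {α : ℝ}
    (hα : α ∈ Set.Icc 0 1) {E F : Config n r P → Prop} (hEF : ∀ c, E c → F c) :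
    pr μ K α E ≤ pr μ K α F :=
  Finset.sum_le_sum fun c _ => by
    have := wt_nonneg hμ K hα c
    split_ifs with hE hF <;> first | rfl | assumption | exact absurd (hEF c hE) hF

open Classical in
lemma pr_eq_sum_vertexWeight (μ : Fin (r + 1) → ℝ) (K : Fin (r + 1) → ℕ) (α : ℝ)
    (E : Config n r P → Prop) :
    pr μ K α E = ∑ v : Fin n → Fin (r + 1) × Finset (Fin P), (∏ x, vertexWeight μ K (v x)) *
      ∑ B : Sym2 (Fin n) → Bool,
        if E (fun x => (v x).1, fun x => (v x).2, B) then ∏ e, channelWeight α e (B e) else 0 := by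
  simp only [pr, wt_eq_prod_mul_prod, Fintype.sum_prod_type, Finset.mul_sum, mul_ite, mul_zero]
  rw [← Fintype.sum_prod_type', ← (Equiv.arrowProdEquivProdArrow (Fin n) _ _).sum_comp]
  rfl

lemma sum_vertexWeight_mul (μ : Fin (r + 1) → ℝ) (K : Fin (r + 1) → ℕ)
    (h : Fin (r + 1) × Finset (Fin P) → ℝ) :
    ∑ v, vertexWeight μ K v * h v = ∑ j, μ j * 𝔼 U ∈ keyRings P (K j), h (j, U) := by
  rw [Fintype.sum_prod_type]
  refine Finset.sum_congr rfl fun j _ => ?_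
  rw [Finset.expect_eq_sum_div_card, Finset.card_powersetCard, Finset.card_fin, keyRings,
    ← Finset.univ_filter_card_eq, Finset.sum_filter, Finset.sum_div, Finset.mul_sum]
  refine Finset.sum_congr rfl fun U _ => ?_
  simp only [vertexWeight]
  split_ifs <;> ring

lemma sum_prod_vertexWeight_of_class {ι : Type*} [Fintype ι] [DecidableEq ι]
    (μ : Fin (r + 1) → ℝ) (K : Fin (r + 1) → ℕ) (i : Fin (r + 1))
    (F : (ι → Finset (Fin P)) → ℝ) :
    ∑ w : ι → Fin (r + 1) × Finset (Fin P), (∏ a, vertexWeight μ K (w a)) *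
        (if ∀ a, (w a).1 = i then F fun a => (w a).2 else 0) =
      μ i ^ Fintype.card ι * 𝔼 S ∈ Fintype.piFinset fun _ : ι => keyRings P (K i), F S := by
  rw [Finset.expect_eq_sum_div_card, Finset.sum_div, Finset.mul_sum]
  symm
  refine Finset.sum_of_injOn (fun S a => (i, S a)) (fun S _ T _ hST => ?_) (by simp [Set.MapsTo])
    (fun w _ hw => ?_) (fun S hS => ?_)
  · ext1 a
    exact congrArg Prod.snd (congrFun hST a)
  · by_cases hi : ∀ a, (w a).1 = i
    · have : ∃ a, (w a).2.card ≠ K i := by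
        by_contra! hcard
        exact hw ⟨fun a => (w a).2, by simpa using hcard, by ext1 a; simp [← hi a]⟩
      obtain ⟨a, ha⟩ := this
      rw [Finset.prod_eq_zero (Finset.mem_univ a) (by simp [vertexWeight, hi a, ha]), zero_mul]
    · rw [if_neg hi, mul_zero]
  · have hcard (a : ι) : (S a).card = K i := by simpa using Fintype.mem_piFinset.1 hS a
    simp only [vertexWeight, hcard, if_true, Finset.prod_const, Finset.card_univ, mul_pow,
      implies_true, Fintype.card_piFinset, Finset.card_powersetCard, Fintype.card_fin,
      Nat.cast_pow, inv_pow, div_eq_mul_inv]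
    ring

lemma sum_prod_channelWeight_off (α : ℝ) {D : Finset (Sym2 (Fin n))} (hD : ∀ e ∈ D, ¬e.IsDiag) :
    ∑ B : Sym2 (Fin n) → Bool,
        (if ∀ e ∈ D, B e = false then ∏ e, channelWeight α e (B e) else 0) =
      (1 - α) ^ D.card := by
  have as_prod (B : Sym2 (Fin n) → Bool) :
      (if ∀ e ∈ D, B e = false then ∏ e, channelWeight α e (B e) else 0) =
        ∏ e, if e ∈ D ∧ B e = true then 0 else channelWeight α e (B e) := by
    split_ifs with h
    · exact Finset.prod_congr rfl fun e _ => by rw [if_neg]; rintro ⟨he, hB⟩; simp [h e he] at hB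
    · push Not at h
      obtain ⟨e, he, hB⟩ := h
      refine (Finset.prod_eq_zero (Finset.mem_univ e) ?_).symm
      rw [if_pos ⟨he, by simpa using hB⟩]
  have marginal (e : Sym2 (Fin n)) :
      ∑ b, (if e ∈ D ∧ b = true then 0 else channelWeight α e b) = if e ∈ D then 1 - α else 1 := by
    by_cases he : e ∈ D
    · simp [he, channelWeight, hD e he]
    · by_cases hdiag : e.IsDiag <;> simp [he, channelWeight, hdiag]
  simp only [as_prod]
  rw [← Fintype.prod_sum (fun e b => if e ∈ D ∧ b = true then 0 else channelWeight α e b)]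
  simp only [marginal, Finset.prod_ite_mem, Finset.univ_inter, Finset.prod_const]

/-! ### Detached sets of vertices -/

section Detached

variable {ι : Type*}

/-- The vertices `s a` all have class `i`, and none of them has a neighbour outside the range of
`s`. For a single vertex this says that it has class `i` and is isolated. -/
def IsDetachedOfClass (i : Fin (r + 1)) (s : ι ↪ Fin n) (c : Config n r P) : Prop :=
  (∀ a, c.1 (s a) = i) ∧ ∀ a, ∀ z ∉ Set.range s, ¬Adj c (s a) z

lemma channel_injective (s : ι ↪ Fin n) :
    Function.Injective fun q : ι × ↥(Set.range s)ᶜ => s(s q.1, (q.2 : Fin n)) := by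
  rintro ⟨a, z⟩ ⟨a', z'⟩ h
  rcases Sym2.eq_iff.1 h with ⟨ha, hz⟩ | ⟨ha, -⟩
  · exact Prod.ext (s.injective ha) (Subtype.ext hz)
  · exact absurd ⟨a, ha⟩ z'.2

variable [Fintype ι]

open Classical in
/-- The channels between the range of `s` and its complement whose two ends share a key, when `R x`
is the ring of the vertex `x`. -/
noncomputable def crossingChannels (s : ι ↪ Fin n) (R : Fin n → Finset (Fin P)) :
    Finset (Sym2 (Fin n)) :=
  (Finset.univ.filter fun q : ι × ↥(Set.range s)ᶜ => ¬Disjoint (R (s q.1)) (R q.2)).map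
    ⟨_, channel_injective s⟩

lemma mem_crossingChannels {s : ι ↪ Fin n} {R : Fin n → Finset (Fin P)} {e : Sym2 (Fin n)} :
    e ∈ crossingChannels s R ↔
      ∃ a, ∃ z ∉ Set.range s, ¬Disjoint (R (s a)) (R z) ∧ s(s a, z) = e := by
  simp [crossingChannels, and_left_comm]

lemma not_isDiag_of_mem_crossingChannels {s : ι ↪ Fin n} {R : Fin n → Finset (Fin P)}
    {e : Sym2 (Fin n)} (he : e ∈ crossingChannels s R) : ¬e.IsDiag := by
  obtain ⟨a, z, hz, -, rfl⟩ := mem_crossingChannels.1 he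
  rw [Sym2.mk_isDiag_iff]
  rintro rfl
  exact hz ⟨a, rfl⟩

lemma isDetachedOfClass_iff_channels_off (i : Fin (r + 1)) (s : ι ↪ Fin n)
    (c : Config n r P) :
    IsDetachedOfClass i s c ↔
      (∀ a, c.1 (s a) = i) ∧ ∀ e ∈ crossingChannels s c.2.1, c.2.2 e = false := by
  refine and_congr_right fun _ => ⟨fun h e he => ?_, fun h a z hz hadj => ?_⟩
  · obtain ⟨a, z, hz, hmeet, rfl⟩ := mem_crossingChannels.1 he
    have hne : s a ≠ z := fun haz => hz ⟨a, haz⟩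
    exact Bool.eq_false_of_not_eq_true fun hon =>
      h a z hz ⟨hne, Finset.not_disjoint_iff_nonempty_inter.1 hmeet, hon⟩
  · have hoff := h s(s a, z) (mem_crossingChannels.2
      ⟨a, z, hz, Finset.not_disjoint_iff_nonempty_inter.2 hadj.2.1, rfl⟩)
    exact Bool.false_ne_true (hoff.symm.trans hadj.2.2)

lemma pow_card_crossingChannels (α : ℝ) (s : ι ↪ Fin n) (R : Fin n → Finset (Fin P)) :
    (1 - α) ^ (crossingChannels s R).card =
      ∏ z : ↥(Set.range s)ᶜ, ∏ a, (1 - α * meet (R (s a)) (R z)) := by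
  classical
  have factor (S T : Finset (Fin P)) :
      1 - α * meet S T = if ¬Disjoint S T then 1 - α else 1 := by
    unfold meet; split_ifs <;> simp
  simp only [factor]
  rw [← Fintype.prod_prod_type_right', Finset.prod_ite, Finset.prod_const_one, mul_one,
    Finset.prod_const, crossingChannels, Finset.card_map]

/-- The probability that a random vertex is adjacent to none of the vertices `a`, the key ring of
`a` being `S a`. -/
noncomputable def nonAdjProb (μ : Fin (r + 1) → ℝ) (K : Fin (r + 1) → ℕ) (α : ℝ)
    (S : ι → Finset (Fin P)) : ℝ :=
  ∑ j, μ j * 𝔼 U ∈ keyRings P (K j), ∏ a, (1 - α * meet (S a) U)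

theorem pr_isDetachedOfClass [DecidableEq ι] (μ : Fin (r + 1) → ℝ) (K : Fin (r + 1) → ℕ) (α : ℝ)
    (i : Fin (r + 1)) (s : ι ↪ Fin n) :
    pr (P := P) μ K α (IsDetachedOfClass i s) =
      μ i ^ Fintype.card ι * 𝔼 S ∈ Fintype.piFinset fun _ : ι => keyRings P (K i),
        nonAdjProb μ K α S ^ (n - Fintype.card ι) := by
  classical
  have channels (v : Fin n → Fin (r + 1) × Finset (Fin P)) :
      ∑ B : Sym2 (Fin n) → Bool,
          (if IsDetachedOfClass i s (fun x => (v x).1, fun x => (v x).2, B) then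
            ∏ e, channelWeight α e (B e) else 0) =
        (if ∀ a, (v (s a)).1 = i then 1 else 0) *
          ∏ z : ↥(Set.range s)ᶜ, ∏ a, (1 - α * meet (v (s a)).2 (v z).2) := by
    simp only [isDetachedOfClass_iff_channels_off, ite_and]
    split_ifs with hi
    · rw [one_mul, sum_prod_channelWeight_off α fun e => not_isDiag_of_mem_crossingChannels,
        pow_card_crossingChannels]
    · rw [Finset.sum_const_zero, zero_mul]
  rw [pr_eq_sum_vertexWeight]
  simp only [channels]
  have fubini := sum_prod_mul_prod_compl_range s (vertexWeight (P := P) μ K)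
    (fun w => if ∀ a, (w a).1 = i then 1 else 0)
    (fun w u => ∏ a, (1 - α * meet (w a).2 u.2))
  simp only [Function.comp_apply, sum_vertexWeight_mul, Fintype.card_fin] at fubini
  rw [fubini, ← sum_prod_vertexWeight_of_class]
  refine Finset.sum_congr rfl fun w _ => ?_
  rw [mul_assoc, ite_mul, one_mul, zero_mul]
  rfl

end Detached

/-! ### First and second moments -/

section Moments

variable {μ : Fin (r + 1) → ℝ} {K : Fin (r + 1) → ℕ} {α : ℝ} {i : Fin (r + 1)}

/-- The event that the vertex `x` has class `i` and is isolated. -/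
def IsIsolatedOfClass (i : Fin (r + 1)) (x : Fin n) (c : Config n r P) : Prop :=
  c.1 x = i ∧ Isolated c x

lemma idxIsClass1Isolated_eq (x : Fin n) :
    IdxIsClass1Isolated (r := r) (P := P) x = IsIsolatedOfClass 0 x := by
  ext c
  simp [IdxIsClass1Isolated, IsIsolatedOfClass, Fin.val_inj]

lemma isIsolatedOfClass_eq_isDetachedOfClass (i : Fin (r + 1)) (x : Fin n) :
    IsIsolatedOfClass (P := P) i x = IsDetachedOfClass i (.punit x : Unit ↪ Fin n) := by
  ext c
  refine and_congr ⟨fun h _ => h, fun h => h ()⟩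
    ⟨fun h _ y _ => h y, fun h y hadj => h () y ?_ hadj⟩
  rintro ⟨_, rfl⟩
  exact hadj.1 rfl

lemma sum_mul_expect_meet (hK : ∀ j, K j ≤ P) {S : Finset (Fin P)} (hS : S.card = K i) :
    ∑ j, μ j * 𝔼 U ∈ keyRings P (K j), meet S U = lamb μ K P i := by
  simp only [lamb, expect_meet (hK _), hS]

theorem pr_isIsolatedOfClass (hμsum : ∑ j, μ j = 1) (hK : ∀ j, K j ≤ P) (x : Fin n) :
    pr (P := P) μ K α (IsIsolatedOfClass i x) = μ i * (1 - α * lamb μ K P i) ^ (n - 1) := by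
  have nonAdj : ∀ S ∈ Fintype.piFinset fun _ : Unit => keyRings P (K i),
      nonAdjProb μ K α S = 1 - α * lamb μ K P i := fun S hS => by
    have hcard : (S ()).card = K i := by simpa using Fintype.mem_piFinset.1 hS ()
    simp only [nonAdjProb, Fintype.prod_unique, PUnit.default_eq_unit, Finset.expect_sub_distrib,
      Finset.expect_const (keyRings_nonempty (hK _)), ← Finset.mul_expect, mul_sub, mul_one,
      Finset.sum_sub_distrib, hμsum, mul_left_comm _ α, ← Finset.mul_sum,
      sum_mul_expect_meet hK hcard]
  rw [isIsolatedOfClass_eq_isDetachedOfClass, pr_isDetachedOfClass,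
    Finset.expect_congr rfl fun S hS => by rw [nonAdj S hS], Finset.expect_const]
  · simp
  · exact Fintype.piFinset_nonempty.2 fun _ => keyRings_nonempty (hK i)

lemma pr_isIsolatedOfClass_and_le (hμ : ∀ j, 0 ≤ μ j) (hα : α ∈ Set.Icc 0 1) {x y : Fin n}
    (hxy : x ≠ y) :
    pr (P := P) μ K α (fun c => IsIsolatedOfClass i x c ∧ IsIsolatedOfClass i y c) ≤
      μ i ^ 2 * 𝔼 S ∈ Fintype.piFinset fun _ : Fin 2 => keyRings P (K i),
        nonAdjProb μ K α S ^ (n - 2) := by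
  have h := pr_isDetachedOfClass (P := P) μ K α i
    (⟨![x, y], injective_pair_iff_ne.2 hxy⟩ : Fin 2 ↪ Fin n)
  rw [Fintype.card_fin] at h
  rw [← h]
  refine pr_mono hμ K hα fun c ⟨hx, hy⟩ => ⟨?_, ?_⟩
  · exact Fin.forall_fin_two.2 ⟨hx.1, hy.1⟩
  · exact Fin.forall_fin_two.2 ⟨fun z _ => hx.2 z, fun z _ => hy.2 z⟩

lemma nonAdjProb_pair (hμsum : ∑ j, μ j = 1) (hK : ∀ j, K j ≤ P)
    {S : Fin 2 → Finset (Fin P)} (hS : ∀ a, (S a).card = K i) :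
    nonAdjProb μ K α S = 1 - 2 * (α * lamb μ K P i) +
      α ^ 2 * ∑ j, μ j * 𝔼 U ∈ keyRings P (K j), meet (S 0) U * meet (S 1) U := by
  have expand (U : Finset (Fin P)) : ∏ a, (1 - α * meet (S a) U) =
      1 - α * meet (S 0) U - α * meet (S 1) U + α ^ 2 * (meet (S 0) U * meet (S 1) U) := by
    rw [Fin.prod_univ_two]
    ring
  simp only [nonAdjProb, expand, Finset.expect_add_distrib, Finset.expect_sub_distrib,
    Finset.expect_const (keyRings_nonempty (hK _)), ← Finset.mul_expect, mul_sub, mul_add, mul_one,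
    Finset.sum_sub_distrib, Finset.sum_add_distrib, hμsum, mul_left_comm _ α,
    mul_left_comm _ (α ^ 2), ← Finset.mul_sum, sum_mul_expect_meet hK (hS _)]
  ring

lemma sum_mul_expect_meet_mul_meet_le (hμ : ∀ j, 0 ≤ μ j) (hK : ∀ j, K j ≤ P)
    {S T : Finset (Fin P)} (hS : S.card = K i) :
    ∑ j, μ j * 𝔼 U ∈ keyRings P (K j), meet S U * meet T U ≤ lamb μ K P i :=
  Finset.sum_le_sum fun j _ => mul_le_mul_of_nonneg_left
    (hS ▸ expect_meet_mul_meet_le (hK j) S T) (hμ j)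

lemma sum_mul_expect_meet_mul_meet_le_of_disjoint (hμ : ∀ j, 0 ≤ μ j) (hK : ∀ j, K j ≤ P)
    {S T : Finset (Fin P)} (hS : S.card = K i) (hT : T.card = K i) (hST : Disjoint S T) :
    ∑ j, μ j * 𝔼 U ∈ keyRings P (K j), meet S U * meet T U ≤
      (∑ j, (μ j)⁻¹) * lamb μ K P i ^ 2 := by
  refine le_trans (Finset.sum_le_sum fun j _ => ?_)
    (sum_mul_sq_le Finset.univ (fun j _ => hμ j) fun j _ => pEdge_nonneg P (K i) (K j))
  have := expect_meet_mul_meet_le_of_disjoint (hK j) hST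
  rw [hS, hT, ← sq] at this
  exact mul_le_mul_of_nonneg_left this (hμ j)

lemma lamb_nonneg (hμ : ∀ j, 0 ≤ μ j) (K : Fin (r + 1) → ℕ) (P : ℕ) (i : Fin (r + 1)) :
    0 ≤ lamb μ K P i :=
  Finset.sum_nonneg fun j _ => mul_nonneg (hμ j) (pEdge_nonneg P (K i) (K j))

lemma mul_pEdge_le_lamb (hμ : ∀ j, 0 ≤ μ j) (K : Fin (r + 1) → ℕ) (P : ℕ) (i j : Fin (r + 1)) :
    μ j * pEdge P (K i) (K j) ≤ lamb μ K P i :=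
  Finset.single_le_sum (f := fun j => μ j * pEdge P (K i) (K j))
    (fun j _ => mul_nonneg (hμ j) (pEdge_nonneg P (K i) (K j))) (Finset.mem_univ j)

lemma nonAdjProb_pair_le (hμ : ∀ j, 0 ≤ μ j) (hμsum : ∑ j, μ j = 1) (hK : ∀ j, K j ≤ P)
    {S : Fin 2 → Finset (Fin P)} (hS : ∀ a, (S a).card = K i) :
    nonAdjProb μ K α S ≤ (1 - α * lamb μ K P i) ^ 2 + (∑ j, (μ j)⁻¹) * (α * lamb μ K P i) ^ 2 +
      meet (S 0) (S 1) * (α * (α * lamb μ K P i)) := by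
  rw [nonAdjProb_pair hμsum hK hS]
  by_cases hdisj : Disjoint (S 0) (S 1)
  · have := mul_le_mul_of_nonneg_left
      (sum_mul_expect_meet_mul_meet_le_of_disjoint hμ hK (hS 0) (hS 1) hdisj) (sq_nonneg α)
    rw [meet, if_pos hdisj]
    nlinarith [sq_nonneg (α * lamb μ K P i)]
  · have := mul_le_mul_of_nonneg_left
      (sum_mul_expect_meet_mul_meet_le (T := S 1) hμ hK (hS 0)) (sq_nonneg α)
    have : 0 ≤ (∑ j, (μ j)⁻¹) * (α * lamb μ K P i) ^ 2 :=
      mul_nonneg (Finset.sum_nonneg fun j _ => inv_nonneg.2 (hμ j)) (sq_nonneg _)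
    rw [meet, if_neg hdisj]
    nlinarith [sq_nonneg (α * lamb μ K P i)]

lemma nonAdjProb_nonneg {ι : Type*} [Fintype ι] (hμ : ∀ j, 0 ≤ μ j) (hα : α ∈ Set.Icc 0 1)
    (S : ι → Finset (Fin P)) : 0 ≤ nonAdjProb μ K α S :=
  Finset.sum_nonneg fun j _ => mul_nonneg (hμ j) <| Finset.expect_nonneg fun _ _ =>
    Finset.prod_nonneg fun _ _ =>
      sub_nonneg.2 (mul_le_one₀ hα.2 (meet_nonneg _ _) (meet_le_one _ _))

lemma expect_meet_pair {b : ℕ} (hb : b ≤ P) :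
    𝔼 S ∈ Fintype.piFinset fun _ : Fin 2 => keyRings P b, meet (S 0) (S 1) = pEdge P b b := by
  have h : 𝔼 S ∈ Fintype.piFinset fun _ : Fin 2 => keyRings P b, meet (S 0) (S 1) =
      𝔼 q ∈ keyRings P b ×ˢ keyRings P b, meet q.1 q.2 :=
    Finset.expect_equiv (finTwoArrowEquiv _) (by simp [Fin.forall_fin_two]) (by simp)
  rw [h, Finset.expect_product, Finset.expect_congr rfl fun S hS => by
    rw [expect_meet hb, (Finset.mem_powersetCard.1 hS).2],
    Finset.expect_const (keyRings_nonempty hb)]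

theorem pr_isIsolatedOfClass_and_le_mixture (hμ : ∀ j, 0 ≤ μ j) (hμsum : ∑ j, μ j = 1)
    (hK : ∀ j, K j ≤ P) (hα : α ∈ Set.Icc 0 1) {x y : Fin n} (hxy : x ≠ y) {Λ X Y : ℝ}
    (hΛ : Λ = α * lamb μ K P i) (hX : X = (1 - Λ) ^ 2 + (∑ j, (μ j)⁻¹) * Λ ^ 2)
    (hY : Y = X + α * Λ) :
    pr (P := P) μ K α (fun c => IsIsolatedOfClass i x c ∧ IsIsolatedOfClass i y c) ≤
      μ i ^ 2 * (X ^ (n - 2) + pEdge P (K i) (K i) * (Y ^ (n - 2) - X ^ (n - 2))) := by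
  refine (pr_isIsolatedOfClass_and_le hμ hα hxy).trans
    (mul_le_mul_of_nonneg_left ?_ (sq_nonneg _))
  have pointwise : ∀ S ∈ Fintype.piFinset fun _ : Fin 2 => keyRings P (K i),
      nonAdjProb μ K α S ^ (n - 2) ≤
        X ^ (n - 2) + meet (S 0) (S 1) * (Y ^ (n - 2) - X ^ (n - 2)) := fun S hS => by
    have hcard (a : Fin 2) : (S a).card = K i := by simpa using Fintype.mem_piFinset.1 hS a
    have hle := nonAdjProb_pair_le (α := α) hμ hμsum hK hcard
    rw [← hΛ, ← hX] at hle
    refine (pow_le_pow_left₀ (nonAdjProb_nonneg hμ hα S) hle _).trans_eq ?_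
    unfold meet
    split_ifs
    · simp
    · simp [hY]
  refine (Finset.expect_le_expect pointwise).trans_eq ?_
  rw [Finset.expect_add_distrib, ← Finset.expect_mul, expect_meet_pair (hK i), Finset.expect_const]
  exact Fintype.piFinset_nonempty.2 fun _ => keyRings_nonempty (hK i)

/-! ### The ratio of the moments -/

/-- The bound `(1 - Λ)⁻² exp (C Λ L) (1 + M Λ exp L)`, where `L = n Λ / (1 - Λ)²`, for the ratio of
the second moment to the square of the first. -/
noncomputable def momentRatioBound (C M : ℝ) (n : ℕ) (Λ : ℝ) : ℝ :=
  ((1 - Λ) ^ 2)⁻¹ * Real.exp (C * (Λ * (n * Λ / (1 - Λ) ^ 2))) *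
    (1 + M * (Λ * Real.exp (n * Λ / (1 - Λ) ^ 2)))

lemma mixture_div_le_momentRatioBound {a p C M Λ : ℝ} (ha : a ∈ Set.Icc 0 1)
    (hp : p ∈ Set.Icc 0 1) (hC : 0 ≤ C) (hΛ : Λ ∈ Set.Ico 0 1) (hap : a * p ≤ M * Λ) {X Y : ℝ}
    (hX : X = (1 - Λ) ^ 2 + C * Λ ^ 2) (hY : Y = X + a * Λ) (hn : 2 ≤ n) :
    (X ^ (n - 2) + p * (Y ^ (n - 2) - X ^ (n - 2))) / ((1 - Λ) ^ (n - 1)) ^ 2 ≤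
      momentRatioBound C M n Λ := by
  obtain ⟨m, rfl⟩ := Nat.exists_eq_add_of_le' hn
  have hne : 1 - Λ ≠ 0 := (sub_pos.2 hΛ.2).ne'
  have hΛ0 := hΛ.1
  set t := Λ / (1 - Λ) ^ 2 with ht
  have ht0 : 0 ≤ t := by positivity
  have hXt : X = (1 - Λ) ^ 2 * (1 + C * Λ * t) := by rw [hX, ht]; field_simp
  have hYt : Y = (1 - Λ) ^ 2 * (1 + C * Λ * t + a * t) := by rw [hY, hXt, ht]; field_simp
  have hmt : m * t ≤ (m + 2 : ℕ) * Λ / (1 - Λ) ^ 2 := by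
    rw [mul_div_assoc, ← ht]
    gcongr
    lia
  calc (X ^ (m + 2 - 2) + p * (Y ^ (m + 2 - 2) - X ^ (m + 2 - 2))) / ((1 - Λ) ^ (m + 2 - 1)) ^ 2
    _ = ((1 - Λ) ^ 2)⁻¹ * ((1 + C * Λ * t) ^ m +
          p * ((1 + C * Λ * t + a * t) ^ m - (1 + C * Λ * t) ^ m)) := by
      rw [hYt, hXt, Nat.add_sub_cancel, mul_pow, mul_pow, pow_right_comm,
        show (1 - Λ) ^ (m + 2 - 1) = (1 - Λ) ^ m * (1 - Λ) from pow_succ _ m,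
        mul_pow ((1 - Λ) ^ m)]
      field_simp
    _ ≤ ((1 - Λ) ^ 2)⁻¹ * (Real.exp (m * (C * Λ * t)) * (1 + a * p * Real.exp (m * t))) := by
      gcongr
      exact mixture_pow_le_exp_mul ha hp ht0 (by positivity) m
    _ ≤ momentRatioBound C M (m + 2) Λ := by
      have hap0 : 0 ≤ a * p := mul_nonneg ha.1 hp.1
      have := hap0.trans hap
      rw [momentRatioBound, mul_assoc (_⁻¹), show m * (C * Λ * t) = C * (Λ * (m * t)) by ring,
        ← mul_assoc M]
      gcongr

theorem pr_isIsolatedOfClass_and_div_sq_le (hμ : ∀ j, 0 ≤ μ j) (hμi : 0 < μ i)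
    (hμsum : ∑ j, μ j = 1) (hK : ∀ j, K j ≤ P) (hα : α ∈ Set.Icc 0 1) {x y : Fin n} (hxy : x ≠ y)
    (hΛ : α * lamb μ K P i < 1) :
    pr (P := P) μ K α (fun c => IsIsolatedOfClass i x c ∧ IsIsolatedOfClass i y c) /
        pr (P := P) μ K α (IsIsolatedOfClass i x) ^ 2 ≤
      momentRatioBound (∑ j, (μ j)⁻¹) (μ i)⁻¹ n (α * lamb μ K P i) := by
  have hn : 2 ≤ n := by have := Fin.val_ne_of_ne hxy; lia
  have overlap : α * pEdge P (K i) (K i) ≤ (μ i)⁻¹ * (α * lamb μ K P i) := by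
    rw [inv_mul_eq_div, le_div_iff₀ hμi, mul_assoc, mul_comm _ (μ i)]
    exact mul_le_mul_of_nonneg_left (mul_pEdge_le_lamb hμ K P i i) hα.1
  rw [pr_isIsolatedOfClass hμsum hK]
  refine le_trans ?_ (mixture_div_le_momentRatioBound hα
    ⟨pEdge_nonneg P (K i) (K i), pEdge_le_one P (K i) (K i)⟩
    (Finset.sum_nonneg fun j _ => inv_nonneg.2 (hμ j))
    ⟨mul_nonneg hα.1 (lamb_nonneg hμ K P i), hΛ⟩ overlap rfl rfl hn)
  refine (div_le_div_of_nonneg_right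
    (pr_isIsolatedOfClass_and_le_mixture hμ hμsum hK hα hxy rfl rfl rfl) (sq_nonneg _)).trans_eq ?_
  rw [mul_pow (μ i), mul_div_mul_left _ _ (pow_pos hμi 2).ne']

end Moments

end RandomKeyGraph

/-! ### The limit -/

lemma tendsto_log_div_mul_rpow {s : ℝ} (hs : s < 1) :
    Tendsto (fun n : ℕ => Real.log n / n * (n : ℝ) ^ s) atTop (nhds 0) := by
  have h := (isLittleO_log_rpow_atTop (sub_pos.2 hs)).tendsto_div_nhds_zero.comp
    tendsto_natCast_atTop_atTop
  refine h.congr' ?_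
  filter_upwards [eventually_gt_atTop 0] with n hn
  have hn : (0 : ℝ) < n := Nat.cast_pos.2 hn
  rw [Function.comp_apply, Real.rpow_sub hn, Real.rpow_one]
  field_simp

lemma tendsto_zero_of_le_log_div {Λ : ℕ → ℝ} {c : ℝ} (hΛ0 : ∀ n, 0 ≤ Λ n)
    (hΛ : ∀ᶠ n : ℕ in atTop, Λ n ≤ c * Real.log n / n) : Tendsto Λ atTop (nhds 0) := by
  refine squeeze_zero' (.of_forall hΛ0) hΛ ?_
  simpa [mul_div_assoc] using (tendsto_log_div_mul_rpow zero_lt_one).const_mul c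

lemma tendsto_momentRatioBound {Λ : ℕ → ℝ} {c : ℝ} (hΛ0 : ∀ n, 0 ≤ Λ n) (hc : c < 1)
    (hΛ : ∀ᶠ n : ℕ in atTop, Λ n ≤ c * Real.log n / n) (C M : ℝ) :
    Tendsto (fun n => momentRatioBound C M n (Λ n)) atTop (nhds 1) := by
  have sq_tendsto : Tendsto (fun n => (1 - Λ n) ^ 2) atTop (nhds 1) := by
    simpa using ((tendsto_zero_of_le_log_div hΛ0 hΛ).const_sub 1).pow 2
  obtain ⟨c', hcc', hc'⟩ := exists_between hc
  have exponent_le : ∀ᶠ n : ℕ in atTop, n * Λ n / (1 - Λ n) ^ 2 ≤ c' * Real.log n := by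
    have c_div_tendsto : Tendsto (fun n => c / (1 - Λ n) ^ 2) atTop (nhds c) := by
      simpa [div_eq_mul_inv] using (sq_tendsto.inv₀ one_ne_zero).const_mul c
    filter_upwards [hΛ, c_div_tendsto.eventually_le_const hcc', eventually_gt_atTop 0]
      with n hn hdiv hpos
    have hpos : (0 : ℝ) < n := Nat.cast_pos.2 hpos
    calc n * Λ n / (1 - Λ n) ^ 2 ≤ c * Real.log n / (1 - Λ n) ^ 2 := by
          rw [le_div_iff₀ hpos, mul_comm] at hn
          gcongr
      _ = c / (1 - Λ n) ^ 2 * Real.log n := by ring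
      _ ≤ c' * Real.log n := by gcongr
  have exp_term : Tendsto (fun n => Λ n * Real.exp (n * Λ n / (1 - Λ n) ^ 2)) atTop (nhds 0) := by
    refine squeeze_zero' (.of_forall fun n => mul_nonneg (hΛ0 n) (Real.exp_pos _).le) ?_
      (by simpa using (tendsto_log_div_mul_rpow hc').const_mul c)
    filter_upwards [hΛ, exponent_le, eventually_gt_atTop 0] with n hn hexp hpos
    rw [← mul_assoc, ← mul_div_assoc, Real.rpow_def_of_pos (Nat.cast_pos.2 hpos), mul_comm _ c']
    have := hΛ0 n
    gcongr
    exact this.trans hn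
  have linear_term : Tendsto (fun n => Λ n * (n * Λ n / (1 - Λ n) ^ 2)) atTop (nhds 0) := by
    refine squeeze_zero (fun n => ?_) (fun n => ?_) exp_term
    · have := hΛ0 n
      positivity
    · exact mul_le_mul_of_nonneg_left ((lt_add_one _).le.trans (Real.add_one_le_exp _)) (hΛ0 n)
  simpa [momentRatioBound] using ((sq_tendsto.inv₀ one_ne_zero).mul
    (Real.continuous_exp.continuousAt.tendsto.comp (linear_term.const_mul C))).mul
      ((exp_term.const_mul M).const_add 1)

theorem second_moment_class1_isolated_general {r : ℕ} (μ : Fin (r + 1) → ℝ)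
    (hμ : ∀ j, 0 ≤ μ j) (hμ0 : 0 < μ 0) (hμsum : ∑ j, μ j = 1)
    (K : ℕ → Fin (r + 1) → ℕ) (P : ℕ → ℕ) (α : ℕ → ℝ)
    (hK : ∀ n j, K n j ≤ P n) (hα : ∀ n, α n ∈ Set.Icc 0 1) {c : ℝ} (hc : c < 1)
    (hΛ : ∀ᶠ n : ℕ in atTop, α n * lamb μ (K n) (P n) 0 ≤ c * Real.log n / n)
    {a b : ℕ} (hab : a ≠ b) :
    limsup
      (fun n : ℕ =>
        pr μ (K n) (α n)
            (fun cfg : Config n r (P n) =>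
              IdxIsClass1Isolated a cfg ∧ IdxIsClass1Isolated b cfg) /
          (pr μ (K n) (α n) (fun cfg : Config n r (P n) => IdxIsClass1Isolated a cfg)) ^ 2)
      atTop ≤ 1 := by
  have Λ_nonneg (n : ℕ) : 0 ≤ α n * lamb μ (K n) (P n) 0 :=
    mul_nonneg (hα n).1 (lamb_nonneg hμ _ _ _)
  have bound_tendsto := tendsto_momentRatioBound Λ_nonneg hc hΛ (∑ j, (μ j)⁻¹) (μ 0)⁻¹
  have Λ_lt_one : ∀ᶠ n in atTop, α n * lamb μ (K n) (P n) 0 < 1 :=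
    (tendsto_zero_of_le_log_div Λ_nonneg hΛ).eventually_lt_const one_pos
  rw [← bound_tendsto.limsup_eq]
  refine limsup_le_limsup ?_ (isCoboundedUnder_le_of_le (x := 0) _ fun n => ?_)
    bound_tendsto.isBoundedUnder_le
  · filter_upwards [Λ_lt_one, eventually_gt_atTop a, eventually_gt_atTop b] with n hlt ha hb
    have hxy : (⟨a, ha⟩ : Fin n) ≠ ⟨b, hb⟩ := by simpa using hab
    have := pr_isIsolatedOfClass_and_div_sq_le hμ hμ0 hμsum (hK n) (hα n) hxy hlt
    simpa only [← idxIsClass1Isolated_eq] using this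
  · exact div_nonneg (pr_nonneg hμ _ (hα n) _) (sq_nonneg _)

/-- if `αₙ λ₁(n) = cₙ log n / n` with `cₙ → c < 1`, then
`limsup E[x_{n,1} x_{n,2}]/(E[x_{n,1}])² ≤ 1`. -/
theorem second_moment_class1_isolated {r : ℕ} (μ : Fin (r + 1) → ℝ)
    (hμpos : ∀ i, 0 < μ i) (hμsum : ∑ i, μ i = 1)
    (K : ℕ → Fin (r + 1) → ℕ) (P : ℕ → ℕ) (α : ℕ → ℝ)
    (hK1 : ∀ n, 1 ≤ K n 0) (hKmono : ∀ n, Monotone (K n))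
    (hKP : ∀ n, 2 * K n (Fin.last r) ≤ P n)
    (hα : ∀ n, α n ∈ Set.Ioo (0 : ℝ) 1)
    (cseq : ℕ → ℝ) (c : ℝ)
    (hscal : ∀ n, 2 ≤ n → α n * lamb μ (K n) (P n) 0 = cseq n * Real.log n / n)
    (hc : Tendsto cseq atTop (nhds c)) (hclt : c < 1) :
    Filter.limsup
      (fun n : ℕ =>
        pr μ (K n) (α n)
            (fun cfg : Config n r (P n) =>
              IdxIsClass1Isolated 0 cfg ∧ IdxIsClass1Isolated 1 cfg) /
          (pr μ (K n) (α n) (fun cfg : Config n r (P n) => IdxIsClass1Isolated 0 cfg)) ^ 2)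
      atTop ≤ 1 := by
  obtain ⟨c', hcc', hc'⟩ := exists_between hclt
  have ring_le_pool (n : ℕ) (j : Fin (r + 1)) : K n j ≤ P n := by
    have := hKmono n (Fin.le_last j)
    have := hKP n
    lia
  refine second_moment_class1_isolated_general μ (fun j => (hμpos j).le) (hμpos 0) hμsum K P α
    ring_le_pool (fun n => Set.Ioo_subset_Icc_self (hα n)) hc' ?_ zero_ne_one
  filter_upwards [hc.eventually_le_const hcc', eventually_ge_atTop 2] with n hn h2
  rw [hscal n h2]
  gcongr
end

section
/- Let 1 ≤ K_1 ≤ K_r ≤ P/2 be integers and set p_1r = 1 − C(P−K_1, K_r)/C(P, K_r). If p_1r ≤ 1/2, then p_1r ≥ K_1 K_r / (2P). -/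
open Filter

/-!
Put `x = K₁ K_r / P`. The probability of avoiding `a + 1` points is `1 - b / (P - a)` times that of
avoiding `a` of them, and this factor is at most `exp (-b / P)`, so the avoidance probability is at
most `exp (-x) ≤ 1 / (1 + x)`. Hence `x / (1 + x) ≤ p`. If `p ≤ 1 / 2` this forces `x ≤ 1`, and then
`x / 2 ≤ x / (1 + x) ≤ p`.
-/

lemma exp_neg_le_inv_one_add {x : ℝ} (hx : -1 < x) : Real.exp (-x) ≤ (1 + x)⁻¹ := by
  rw [Real.exp_neg]
  exact inv_anti₀ (by linarith) (by linarith [Real.add_one_le_exp x])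

lemma cast_choose_eq_choose_succ_mul {K : Type*} [Field K] [CharZero K] (m b : ℕ) :
    (m.choose b : K) = (m + 1).choose b * (1 - (b : K) / (m + 1 : ℕ)) := by
  rcases le_or_gt b (m + 1) with hb | hb
  · have hm : ((m + 1 : ℕ) : K) ≠ 0 := Nat.cast_ne_zero.mpr m.succ_ne_zero
    have absorption : (m.choose b : K) * (m + 1 : ℕ) = (m + 1).choose b * ((m + 1 : ℕ) - b) := by
      rw [← Nat.cast_sub hb]
      exact_mod_cast Nat.choose_mul_succ_eq m b
    rw [one_sub_div hm, ← mul_div_assoc, ← absorption, mul_div_cancel_right₀ _ hm]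
  · simp [Nat.choose_eq_zero_of_lt hb, Nat.choose_eq_zero_of_lt (Nat.lt_of_succ_lt hb)]

section avoidProb

variable {P a b : ℕ}

lemma avoidProb_nonneg (P a b : ℕ) : 0 ≤ avoidProb P a b := by
  unfold avoidProb
  positivity

lemma avoidProb_zero (hb : b ≤ P) : avoidProb P 0 b = 1 :=
  div_self (Nat.cast_ne_zero.mpr (Nat.choose_pos hb).ne')

lemma avoidProb_succ (ha : a < P) (b : ℕ) :
    avoidProb P (a + 1) b = avoidProb P a b * (1 - (b : ℝ) / (P - a : ℕ)) := by
  have hPa : P - (a + 1) + 1 = P - a := by omega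
  rw [avoidProb, cast_choose_eq_choose_succ_mul, hPa, mul_div_right_comm, avoidProb]

lemma avoidProb_succ_le (ha : a < P) (b : ℕ) :
    avoidProb P (a + 1) b ≤ avoidProb P a b * Real.exp (-(b / P)) := by
  have hfactor : 1 - (b : ℝ) / (P - a : ℕ) ≤ Real.exp (-(b / P)) := calc
    1 - (b : ℝ) / (P - a : ℕ) ≤ 1 - b / P := by
      have : 0 < P - a := Nat.sub_pos_of_lt ha
      gcongr
      exact Nat.sub_le P a
    _ ≤ Real.exp (-(b / P)) := Real.one_sub_le_exp_neg _
  rw [avoidProb_succ ha]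
  exact mul_le_mul_of_nonneg_left hfactor (avoidProb_nonneg P a b)

lemma avoidProb_le_exp (ha : a ≤ P) (hb : b ≤ P) :
    avoidProb P a b ≤ Real.exp (-(a * b / P)) := by
  induction a with
  | zero => simp [avoidProb_zero hb]
  | succ a ih => calc
      avoidProb P (a + 1) b ≤ avoidProb P a b * Real.exp (-(b / P)) := avoidProb_succ_le ha b
      _ ≤ Real.exp (-(a * b / P)) * Real.exp (-(b / P)) := by
        gcongr
        exact ih (Nat.le_of_succ_le ha)
      _ = Real.exp (-((a + 1 : ℕ) * b / P)) := by
        rw [← Real.exp_add]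
        push_cast
        ring_nf

lemma one_sub_exp_le_pEdge (ha : a ≤ P) (hb : b ≤ P) :
    1 - Real.exp (-(a * b / P)) ≤ pEdge P a b :=
  sub_le_sub_left (avoidProb_le_exp ha hb) 1

end avoidProb

lemma half_le_of_one_sub_exp_neg_le {x p : ℝ} (hx : 0 ≤ x) (hxp : 1 - Real.exp (-x) ≤ p)
    (hp : p ≤ 1 / 2) : x / 2 ≤ p := by
  have hratio : x / (1 + x) ≤ p := calc
    x / (1 + x) = 1 - (1 + x)⁻¹ := by field_simp; ring
    _ ≤ 1 - Real.exp (-x) := by gcongr; exact exp_neg_le_inv_one_add (by linarith)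
    _ ≤ p := hxp
  have hx_le_one : x ≤ 1 := by
    have := (div_le_iff₀ (by positivity)).mp (hratio.trans hp)
    linarith
  calc
    x / 2 ≤ x / (1 + x) := by gcongr; linarith
    _ ≤ p := hratio

theorem p1r_lower_bound_general {K1 Kr P : ℕ} (hK1 : K1 ≤ P) (hKr : Kr ≤ P)
    (h : pEdge P K1 Kr ≤ 1 / 2) :
    (K1 : ℝ) * (Kr : ℝ) / (2 * (P : ℝ)) ≤ pEdge P K1 Kr := by
  rw [mul_comm 2 (P : ℝ), ← div_div]
  exact half_le_of_one_sub_exp_neg_le (by positivity) (one_sub_exp_le_pEdge hK1 hKr) h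

/-- if `p_{1r} ≤ 1/2` then `p_{1r} ≥ K₁ K_r / (2P)`. -/
theorem p1r_lower_bound (K1 Kr P : ℕ) (hK1 : 1 ≤ K1) (hK1r : K1 ≤ Kr) (hKP : 2 * Kr ≤ P)
    (h : pEdge P K1 Kr ≤ 1 / 2) :
    (K1 : ℝ) * (Kr : ℝ) / (2 * (P : ℝ)) ≤ pEdge P K1 Kr :=
  p1r_lower_bound_general (by omega) (by omega) h
end
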